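/- arXiv:0807.3980 — 2 statements merged into one kernel-verified Lean document; each statement's English description precedes it below -/
import Mathlib

section
/- Let Γ be a residually finite discrete subgroup of SL₂(ℝ)×SL₂(ℝ) that is not a torsion group (i.e., Γ contains an element of infinite order). Then Γ acts properly discontinuously on SL₂(ℝ) by (γ₁,γ₂)·g = γ₁gγ₂⁻¹ if and only if, possibly after composing the inclusion of Γ with the swap automorphism (γ₁,γ₂) ↦ (γ₂,γ₁) of SL₂(ℝ)×SL₂(ℝ), Γ has a finite-index subgroup Γ' for which there exist a discrete subgroup Γ₀ of SL₂(ℝ) and a group homomorphism φ : Γ₀ → SL₂(ℝ) such that Γ' = {(γ, φ(γ)) : γ ∈ Γ₀} and, for every real C > 0, all but finitely many γ ∈ Γ₀ satisfy C·‖φ(γ)‖ < ‖γ‖. -/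
/-!
STATEMENT 1: residually finite, non-torsion discrete subgroups of SL₂(ℝ)×SL₂(ℝ)
act properly discontinuously on SL₂(ℝ) iff, up to swapping the two factors, they
virtually are graphs of the stated form.
-/

open Matrix

/-- `SL₂(ℝ)`. -/
abbrev SL2R := Matrix.SpecialLinearGroup (Fin 2) ℝ

/-- The topology on SL₂(ℝ) as a subset of the 2×2 real matrices. -/
instance : TopologicalSpace SL2R :=
  TopologicalSpace.induced (fun g => (g : Matrix (Fin 2) (Fin 2) ℝ)) inferInstance

/-- The operator norm of `g ∈ SL₂(ℝ)` acting on Euclidean ℝ². -/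
noncomputable def sl2OpNorm (g : SL2R) : ℝ :=
  ‖Matrix.toEuclideanCLM (𝕜 := ℝ) (g : Matrix (Fin 2) (Fin 2) ℝ)‖

open scoped Matrix.Norms.L2Operator in
theorem sl2OpNorm_eq (g : SL2R) : sl2OpNorm g = ‖(g : Matrix (Fin 2) (Fin 2) ℝ)‖ := rfl

open scoped Matrix.Norms.L2Operator in
theorem sl2OpNorm_continuous : Continuous sl2OpNorm := by
  have h : Continuous (fun g : SL2R => (g : Matrix (Fin 2) (Fin 2) ℝ)) := continuous_induced_dom
  have h2 : Continuous (fun g : SL2R => ‖(g : Matrix (Fin 2) (Fin 2) ℝ)‖) := h.norm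
  exact h2

theorem sl2_isClosedEmbedding :
    Topology.IsClosedEmbedding (fun g : SL2R => (g : Matrix (Fin 2) (Fin 2) ℝ)) := by
  refine ⟨⟨⟨rfl⟩, Subtype.val_injective⟩, ?_⟩
  have : Set.range (fun g : SL2R => (g : Matrix (Fin 2) (Fin 2) ℝ)) = {A | A.det = 1} := by
    ext A
    constructor
    · rintro ⟨g, rfl⟩
      exact g.2
    · intro h
      exact ⟨⟨A, h⟩, rfl⟩
  rw [this]
  exact isClosed_eq (Continuous.matrix_det continuous_id) continuous_const

open scoped Matrix.Norms.L2Operator in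
theorem sl2_compact_ball (R : ℝ) : IsCompact {g : SL2R | sl2OpNorm g ≤ R} := by
  have : ProperSpace (Matrix (Fin 2) (Fin 2) ℝ) := FiniteDimensional.proper ℝ _
  have h := sl2_isClosedEmbedding.isCompact_preimage
    (isCompact_closedBall (0 : Matrix (Fin 2) (Fin 2) ℝ) R)
  convert h using 1
  ext g
  simp [sl2OpNorm_eq]

instance sl2_t2 : T2Space SL2R := sl2_isClosedEmbedding.isEmbedding.t2Space

open scoped Matrix.Norms.L2Operator in
theorem sl2OpNorm_mul (g h : SL2R) : sl2OpNorm (g * h) ≤ sl2OpNorm g * sl2OpNorm h := by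
  simp only [sl2OpNorm_eq, Matrix.SpecialLinearGroup.coe_mul]
  exact norm_mul_le _ _

open scoped Matrix.Norms.L2Operator in
theorem sl2OpNorm_one : sl2OpNorm 1 = 1 := by
  simp only [sl2OpNorm_eq, Matrix.SpecialLinearGroup.coe_one]
  exact norm_one

open scoped Matrix.Norms.L2Operator in
theorem sl2OpNorm_inv_le (g : SL2R) : sl2OpNorm g⁻¹ ≤ sl2OpNorm g := by
  have hJ : (!![0, 1; -1, 0] : Matrix (Fin 2) (Fin 2) ℝ) ∈ unitary (Matrix (Fin 2) (Fin 2) ℝ) := by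
    rw [Unitary.mem_iff]
    constructor <;> ext i j <;> fin_cases i <;> fin_cases j <;>
      simp [Matrix.mul_apply, Matrix.star_apply]
  have e : ((g⁻¹ : SL2R) : Matrix (Fin 2) (Fin 2) ℝ)
      = !![0, 1; -1, 0] * (g : Matrix (Fin 2) (Fin 2) ℝ)ᴴ * star !![0, 1; -1, 0] := by
    rw [Matrix.SpecialLinearGroup.coe_inv, Matrix.adjugate_fin_two]
    ext i j
    rw [Matrix.mul_apply, Fin.sum_univ_two, Matrix.mul_apply, Matrix.mul_apply, Fin.sum_univ_two,
      Fin.sum_univ_two]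
    fin_cases i <;> fin_cases j <;>
      simp [Matrix.star_apply]
  simp only [sl2OpNorm_eq]
  rw [e]
  refine (norm_mul_le _ _).trans ?_
  rw [norm_star, CStarRing.norm_of_mem_unitary hJ, mul_one]
  refine (norm_mul_le _ _).trans ?_
  rw [CStarRing.norm_of_mem_unitary hJ, one_mul, Matrix.l2_opNorm_conjTranspose]

theorem sl2OpNorm_inv (g : SL2R) : sl2OpNorm g⁻¹ = sl2OpNorm g :=
  le_antisymm (sl2OpNorm_inv_le g) (by simpa using sl2OpNorm_inv_le g⁻¹)

theorem sl2OpNorm_nonneg (g : SL2R) : 0 ≤ sl2OpNorm g := norm_nonneg _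

theorem one_le_sl2OpNorm (g : SL2R) : 1 ≤ sl2OpNorm g := by
  have h := sl2OpNorm_mul g g⁻¹
  rw [mul_inv_cancel, sl2OpNorm_one, sl2OpNorm_inv] at h
  nlinarith [sl2OpNorm_nonneg g]

/-- rotation matrices -/
noncomputable def sl2rot (θ : ℝ) : SL2R :=
  ⟨!![Real.cos θ, -Real.sin θ; Real.sin θ, Real.cos θ], by
    rw [Matrix.det_fin_two_of]; nlinarith [Real.sin_sq_add_cos_sq θ]⟩

/-- diagonal matrices -/
noncomputable def sl2diag (l : ℝ) (h : l ≠ 0) : SL2R :=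
  ⟨!![l, 0; 0, l⁻¹], by rw [Matrix.det_fin_two_of]; simp [h]⟩

theorem sl2rot_coe (θ : ℝ) : ((sl2rot θ : SL2R) : Matrix (Fin 2) (Fin 2) ℝ) =
  !![Real.cos θ, -Real.sin θ; Real.sin θ, Real.cos θ] := rfl

theorem sl2diag_coe (l : ℝ) (h : l ≠ 0) : ((sl2diag l h : SL2R) : Matrix (Fin 2) (Fin 2) ℝ) =
  !![l, 0; 0, l⁻¹] := rfl

theorem sl2_mul_apply (g h : SL2R) (i j : Fin 2) :
    (g * h) i j = g i 0 * h 0 j + g i 1 * h 1 j := by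
  rw [Matrix.SpecialLinearGroup.coe_mul, Matrix.mul_apply, Fin.sum_univ_two]

open scoped Matrix.Norms.L2Operator in
theorem sl2OpNorm_rot (θ : ℝ) : sl2OpNorm (sl2rot θ) = 1 := by
  have hJ : ((sl2rot θ : SL2R) : Matrix (Fin 2) (Fin 2) ℝ) ∈ unitary (Matrix (Fin 2) (Fin 2) ℝ) := by
    have := Real.sin_sq_add_cos_sq θ
    rw [Unitary.mem_iff]
    constructor <;> ext i j <;> fin_cases i <;> fin_cases j <;>
      simp [Matrix.mul_apply, Matrix.star_apply, sl2rot] <;> nlinarith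
  rw [sl2OpNorm_eq]
  exact CStarRing.norm_of_mem_unitary hJ

open scoped Matrix.Norms.L2Operator in
theorem sl2OpNorm_diag (l : ℝ) (h : l ≠ 0) : sl2OpNorm (sl2diag l h) = max |l| |l⁻¹| := by
  rw [sl2OpNorm_eq]
  have : ((sl2diag l h : SL2R) : Matrix (Fin 2) (Fin 2) ℝ) = Matrix.diagonal ![l, l⁻¹] := by
    ext i j
    fin_cases i <;> fin_cases j <;> simp [sl2diag]
  rw [this, Matrix.l2_opNorm_diagonal]
  apply le_antisymm
  · rw [pi_norm_le_iff_of_nonneg (le_max_of_le_left (abs_nonneg _))]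
    intro i
    fin_cases i <;> simp
  · apply max_le
    · exact norm_le_pi_norm ![l, l⁻¹] 0
    · exact norm_le_pi_norm ![l, l⁻¹] 1

/-- weak Cartan decomposition -/
theorem sl2_kak_aux (a : SL2R) : ∃ θ ψ l, ∃ h : 0 < l,
    a * sl2rot θ = sl2rot ψ * sl2diag l h.ne' := by
  obtain ⟨θ, hθ⟩ : ∃ θ : ℝ, (a 0 0 * Real.cos θ + a 0 1 * Real.sin θ) *
      (-a 0 0 * Real.sin θ + a 0 1 * Real.cos θ) + (a 1 0 * Real.cos θ + a 1 1 * Real.sin θ) *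
      (-a 1 0 * Real.sin θ + a 1 1 * Real.cos θ) = 0 := by
    set p := a 0 0 ^ 2 + a 1 0 ^ 2
    set r := a 0 1 ^ 2 + a 1 1 ^ 2
    set q := a 0 0 * a 0 1 + a 1 0 * a 1 1
    set z : ℂ := ⟨(p - r) / 2, q⟩
    refine ⟨z.arg / 2, ?_⟩
    have h1 := Complex.norm_mul_cos_arg z
    have h2 := Complex.norm_mul_sin_arg z
    have e : z.arg = 2 * (z.arg / 2) := by ring
    rw [e] at h1 h2
    rw [Real.cos_two_mul'] at h1
    rw [Real.sin_two_mul] at h2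
    set c := Real.cos (z.arg / 2)
    set s := Real.sin (z.arg / 2)
    have h1' : ‖z‖ * (c ^ 2 - s ^ 2) = (p - r) / 2 := h1
    have h2' : ‖z‖ * (2 * s * c) = q := h2
    have : q * (c ^ 2 - s ^ 2) - (p - r) * (s * c) = 0 := by
      have e3 : p - r = 2 * (‖z‖ * (c ^ 2 - s ^ 2)) := by linarith
      rw [e3, ← h2']; ring
    rw [← this]
    simp only [p, q, r]
    ring
  have hdet : (a * sl2rot θ).1.det = 1 := (a * sl2rot θ).2
  set b := a * sl2rot θ with hb
  have e00 : b 0 0 = a 0 0 * Real.cos θ + a 0 1 * Real.sin θ := by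
    rw [hb, sl2_mul_apply, sl2rot_coe]; simp
  have e01 : b 0 1 = -a 0 0 * Real.sin θ + a 0 1 * Real.cos θ := by
    rw [hb, sl2_mul_apply, sl2rot_coe]; simp
  have e10 : b 1 0 = a 1 0 * Real.cos θ + a 1 1 * Real.sin θ := by
    rw [hb, sl2_mul_apply, sl2rot_coe]; simp
  have e11 : b 1 1 = -a 1 0 * Real.sin θ + a 1 1 * Real.cos θ := by
    rw [hb, sl2_mul_apply, sl2rot_coe]; simp
  rw [← e00, ← e01, ← e10, ← e11] at hθ
  have hdet' : b 0 0 * b 1 1 - b 0 1 * b 1 0 = 1 := by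
    rw [Matrix.det_fin_two] at hdet; exact hdet
  set w : ℂ := ⟨b 0 0, b 1 0⟩
  have hw : w ≠ 0 := by
    intro h0
    have h1 : b 0 0 = 0 := congrArg Complex.re h0
    have h2 : b 1 0 = 0 := congrArg Complex.im h0
    rw [h1, h2] at hdet'; simp at hdet'
  have hl : 0 < ‖w‖ := norm_pos_iff.2 hw
  have hsq : ‖w‖ ^ 2 = b 0 0 ^ 2 + b 1 0 ^ 2 := by
    rw [Complex.sq_norm, Complex.normSq_apply]; simp only [w]; ring
  have h1 : ‖w‖ * Real.cos w.arg = b 0 0 := Complex.norm_mul_cos_arg w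
  have h2 : ‖w‖ * Real.sin w.arg = b 1 0 := Complex.norm_mul_sin_arg w
  have k1 : b 1 1 * ‖w‖ ^ 2 = b 0 0 := by
    rw [hsq]
    linear_combination b 0 0 * hdet' + b 1 0 * hθ
  have k2 : b 0 1 * ‖w‖ ^ 2 = - b 1 0 := by
    rw [hsq]
    linear_combination b 0 0 * hθ - b 1 0 * hdet'
  refine ⟨θ, w.arg, ‖w‖, hl, ?_⟩
  rw [← hb]
  have f1 : b 1 1 = Real.cos w.arg * ‖w‖⁻¹ := by
    field_simp
    apply mul_right_cancel₀ hl.ne'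
    linarith
  have f2 : b 0 1 = - Real.sin w.arg * ‖w‖⁻¹ := by
    field_simp
    apply mul_right_cancel₀ hl.ne'
    linarith
  ext i j
  fin_cases i <;> fin_cases j
  · rw [sl2_mul_apply (sl2rot w.arg), sl2rot_coe, sl2diag_coe]; simp; linarith
  · rw [sl2_mul_apply (sl2rot w.arg), sl2rot_coe, sl2diag_coe]; simp; linarith
  · rw [sl2_mul_apply (sl2rot w.arg), sl2rot_coe, sl2diag_coe]; simp; linarith
  · rw [sl2_mul_apply (sl2rot w.arg), sl2rot_coe, sl2diag_coe]; simp; linarith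

theorem sl2_kak (a : SL2R) : ∃ k m : SL2R, sl2OpNorm k = 1 ∧ sl2OpNorm m = 1 ∧ ∃ l, ∃ h : 1 ≤ l,
    a = k * sl2diag l (by positivity) * m := by
  obtain ⟨θ, ψ, l, h, e⟩ := sl2_kak_aux a
  by_cases h1 : 1 ≤ l
  · refine ⟨sl2rot ψ, (sl2rot θ)⁻¹, sl2OpNorm_rot _, ?_, l, h1, ?_⟩
    · rw [sl2OpNorm_inv, sl2OpNorm_rot]
    · rw [← e]; group
  · have h2 : 1 ≤ l⁻¹ := (one_le_inv₀ h).2 (le_of_not_ge h1)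
    set J := sl2rot (Real.pi / 2)
    have hJ : sl2diag l h.ne' = J * sl2diag l⁻¹ (by positivity) * J⁻¹ := by
      rw [eq_mul_inv_iff_mul_eq]
      ext i j
      rw [sl2_mul_apply, sl2_mul_apply, sl2rot_coe, sl2diag_coe, sl2diag_coe]
      fin_cases i <;> fin_cases j <;> simp
    have hle : ∀ x y : SL2R, sl2OpNorm x = 1 → sl2OpNorm y = 1 → sl2OpNorm (x * y) = 1 := by
      intro x y hx hy
      refine le_antisymm ?_ (one_le_sl2OpNorm _)
      simpa [hx, hy] using sl2OpNorm_mul x y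
    refine ⟨sl2rot ψ * J, J⁻¹ * (sl2rot θ)⁻¹, ?_, ?_, l⁻¹, h2, ?_⟩
    · exact hle _ _ (sl2OpNorm_rot _) (sl2OpNorm_rot _)
    · apply hle <;> rw [sl2OpNorm_inv, sl2OpNorm_rot]
    · have : a = sl2rot ψ * sl2diag l h.ne' * (sl2rot θ)⁻¹ := by rw [← e]; group
      rw [this, hJ]; group

theorem sl2_norm_kak {k m : SL2R} (hk : sl2OpNorm k = 1) (hm : sl2OpNorm m = 1) (d : SL2R) :
    sl2OpNorm (k * d * m) = sl2OpNorm d := by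
  have key : ∀ k m d : SL2R, sl2OpNorm k = 1 → sl2OpNorm m = 1 →
      sl2OpNorm (k * d * m) ≤ sl2OpNorm d := by
    intro k m d hk hm
    have h1 := sl2OpNorm_mul (k * d) m
    have h2 := sl2OpNorm_mul k d
    rw [hm] at h1
    rw [hk] at h2
    linarith
  refine le_antisymm (key _ _ _ hk hm) ?_
  have := key k⁻¹ m⁻¹ (k * d * m) (by rw [sl2OpNorm_inv, hk]) (by rw [sl2OpNorm_inv, hm])
  have e : k⁻¹ * (k * d * m) * m⁻¹ = d := by group
  rwa [e] at this

theorem sl2_exists_conn (a b : SL2R) (C : ℝ) (h1 : sl2OpNorm a ≤ C * sl2OpNorm b)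
    (h2 : sl2OpNorm b ≤ C * sl2OpNorm a) :
    ∃ g : SL2R, sl2OpNorm g = 1 ∧ sl2OpNorm (a * g * b⁻¹) ≤ C := by
  obtain ⟨k, m, hk, hm, l, hl, rfl⟩ := sl2_kak a
  obtain ⟨k', m', hk', hm', l', hl', rfl⟩ := sl2_kak b
  have p : 0 < l := by linarith
  have p' : 0 < l' := by linarith
  rw [sl2_norm_kak hk hm, sl2_norm_kak hk' hm'] at h1 h2
  have en : ∀ l (h : 1 ≤ l), sl2OpNorm (sl2diag l (by positivity)) = l := by
    intro l h
    rw [sl2OpNorm_diag, abs_of_pos (by linarith), abs_of_pos (by positivity)]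
    exact max_eq_left ((inv_le_one_of_one_le₀ h).trans h)
  rw [en l hl, en l' hl'] at h1 h2
  refine ⟨m⁻¹ * m', ?_, ?_⟩
  · refine le_antisymm ?_ (one_le_sl2OpNorm _)
    have := sl2OpNorm_mul m⁻¹ m'
    rwa [sl2OpNorm_inv, hm, hm', mul_one] at this
  · have hd : sl2diag l p.ne' * (sl2diag l' p'.ne')⁻¹ = sl2diag (l / l') (by positivity) := by
      rw [mul_inv_eq_iff_eq_mul]
      ext i j
      rw [sl2_mul_apply, sl2diag_coe, sl2diag_coe, sl2diag_coe]
      fin_cases i <;> fin_cases j <;> simp <;> field_simp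
    have e : k * sl2diag l p.ne' * m * (m⁻¹ * m') * (k' * sl2diag l' p'.ne' * m')⁻¹
        = k * sl2diag (l / l') (by positivity) * k'⁻¹ := by
      rw [← hd]; group
    rw [e, sl2_norm_kak hk (by rw [sl2OpNorm_inv, hk']), sl2OpNorm_diag]
    rw [abs_of_pos (by positivity), abs_of_pos (by positivity), inv_div]
    apply max_le
    · rwa [div_le_iff₀ p']
    · rwa [div_le_iff₀ p]

/-- Properness criterion. -/
theorem sl2_pd_iff (Γ : Subgroup (SL2R × SL2R)) :
    (∀ K L : Set SL2R, IsCompact K → IsCompact L →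
      {γ : Γ | ((fun g => (γ : SL2R × SL2R).1 * g * ((γ : SL2R × SL2R).2)⁻¹) '' K ∩ L).Nonempty}.Finite)
    ↔ ∀ C : ℝ, {γ : Γ | sl2OpNorm γ.1.1 ≤ C * sl2OpNorm γ.1.2 ∧
        sl2OpNorm γ.1.2 ≤ C * sl2OpNorm γ.1.1}.Finite := by
  constructor
  · intro H C
    refine (H _ _ (sl2_compact_ball 1) (sl2_compact_ball C)).subset ?_
    rintro γ ⟨h1, h2⟩
    obtain ⟨g, hg, hg'⟩ := sl2_exists_conn _ _ C h1 h2
    exact ⟨_, ⟨g, hg.le, rfl⟩, hg'⟩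
  · intro H K L hK hL
    obtain ⟨R, hR⟩ := hK.bddAbove_image sl2OpNorm_continuous.continuousOn
    obtain ⟨S, hS⟩ := hL.bddAbove_image sl2OpNorm_continuous.continuousOn
    refine (H (S * R)).subset ?_
    rintro γ ⟨_, ⟨g, hg, rfl⟩, hx⟩
    have hgR : sl2OpNorm g ≤ R := hR ⟨g, hg, rfl⟩
    have hxS := hS ⟨_, hx, rfl⟩
    have p1 := one_le_sl2OpNorm g
    dsimp only at hxS hx
    set a := γ.1.1
    set b := γ.1.2
    set x := a * g * b⁻¹ with hxdef
    have p2 := one_le_sl2OpNorm x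
    have pa := one_le_sl2OpNorm a
    have pb := one_le_sl2OpNorm b
    have hSR : sl2OpNorm x * sl2OpNorm g ≤ S * R := by
      apply mul_le_mul hxS hgR <;> linarith
    have ea : a = x * b * g⁻¹ := by rw [hxdef]; group
    have eb : b = x⁻¹ * a * g := by rw [hxdef]; group
    constructor
    · have h1 := sl2OpNorm_mul (x * b) g⁻¹
      have h2 := sl2OpNorm_mul x b
      rw [sl2OpNorm_inv, ← ea] at h1
      calc sl2OpNorm a ≤ sl2OpNorm (x * b) * sl2OpNorm g := h1
        _ ≤ (sl2OpNorm x * sl2OpNorm b) * sl2OpNorm g := by gcongr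
        _ = (sl2OpNorm x * sl2OpNorm g) * sl2OpNorm b := by ring
        _ ≤ _ := by gcongr
    · have h1 := sl2OpNorm_mul (x⁻¹ * a) g
      have h2 := sl2OpNorm_mul x⁻¹ a
      rw [← eb] at h1
      rw [sl2OpNorm_inv] at h2
      calc sl2OpNorm b ≤ sl2OpNorm (x⁻¹ * a) * sl2OpNorm g := h1
        _ ≤ (sl2OpNorm x * sl2OpNorm a) * sl2OpNorm g := by gcongr
        _ = (sl2OpNorm x * sl2OpNorm g) * sl2OpNorm a := by ring
        _ ≤ _ := by gcongr

theorem ends_aux {G : Type*} [Group G] (P : G → Prop)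
    (hinv : ∀ g, P g⁻¹ ↔ P g) (hfin : ∀ s, {g | P g ∧ ¬ P (g * s)}.Finite)
    (t : G) (ht : Function.Injective (fun n : ℕ => t ^ n)) (hP : ∀ᶠ n : ℕ in Filter.atTop, P (t ^ n)) :
    {g | ¬ P g}.Finite := by
  -- left translates
  have hleft : ∀ s, ∀ᶠ n : ℕ in Filter.atTop, P (s * t ^ n) := by
    intro s
    have h1 : {n : ℕ | P (t ^ n)⁻¹ ∧ ¬ P ((t ^ n)⁻¹ * s⁻¹)}.Finite :=
      (hfin s⁻¹).preimage (f := fun n : ℕ => (t ^ n)⁻¹) (fun a _ b _ h => ht (inv_injective h))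
    have h2 := h1.eventually_cofinite_notMem
    rw [Nat.cofinite_eq_atTop] at h2
    filter_upwards [hP, h2] with n hn hn2
    by_contra hc
    apply hn2
    refine ⟨(hinv _).2 hn, ?_⟩
    rw [← _root_.mul_inv_rev, hinv]
    exact hc
  have hleft' : ∀ s, ∀ᶠ n : ℕ in Filter.atTop, P (s * (t ^ n)⁻¹) := by
    intro s
    have h1 : {n : ℕ | P (t ^ n) ∧ ¬ P ((t ^ n) * s⁻¹)}.Finite :=
      (hfin s⁻¹).preimage (f := fun n : ℕ => (t ^ n)) (fun a _ b _ h => ht h)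
    have h2 := h1.eventually_cofinite_notMem
    rw [Nat.cofinite_eq_atTop] at h2
    filter_upwards [hP, h2] with n hn hn2
    by_contra hc
    apply hn2
    refine ⟨hn, ?_⟩
    rw [← hinv, _root_.mul_inv_rev, inv_inv]
    exact hc
  set E := {g | P g ∧ ¬ P (g * t⁻¹)}
  have hE : E.Finite := hfin t⁻¹
  have hsub : {g | ¬ P g} ⊆ ⋃ e ∈ E, (fun n : ℕ => e * (t ^ n)⁻¹) '' {n | ¬ P (e * (t ^ n)⁻¹)} := by
    intro g hg
    have hex : ∃ n : ℕ, P (g * t ^ n) := (hleft g).exists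
    classical
    have hn := Nat.find_spec hex
    have hmin := fun m => Nat.find_min hex (m := m)
    set n := Nat.find hex
    have hn0 : n ≠ 0 := by
      intro h0
      rw [h0] at hn
      exact hg (by simpa using hn)
    obtain ⟨m, hm⟩ := Nat.exists_eq_succ_of_ne_zero hn0
    have eg : g * t ^ n * (t ^ n)⁻¹ = g := by group
    simp only [Set.mem_iUnion]
    refine ⟨g * t ^ n, ⟨hn, ?_⟩, n, ?_, eg⟩
    · have := hmin m (by omega)
      rw [hm, Nat.succ_eq_add_one, pow_succ]
      simpa [mul_assoc] using this
    · simp only [Set.mem_ofPred_eq]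
      rw [eg]; exact hg
  refine (hE.biUnion fun e _ => Set.Finite.image _ ?_).subset hsub
  have := hleft' e
  rw [← Nat.cofinite_eq_atTop, Filter.eventually_cofinite] at this
  exact this

theorem ends_lemma {G : Type*} [Group G] (P : G → Prop)
    (hinv : ∀ g, P g⁻¹ ↔ P g) (hfin : ∀ s, {g | P g ∧ ¬ P (g * s)}.Finite)
    (t : G) (ht : ¬ IsOfFinOrder t) : {g | ¬ P g}.Finite ∨ {g | P g}.Finite := by
  have htinj : Function.Injective (fun n : ℕ => t ^ n) := injective_pow_iff_not_isOfFinOrder.2 ht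
  have hfin' : ∀ s, {g | ¬ P g ∧ ¬ ¬ P (g * s)}.Finite := by
    intro s
    refine ((hfin s⁻¹).preimage (f := fun g => g * s)
      (fun a _ b _ h => mul_right_cancel h)).subset ?_
    rintro g ⟨h1, h2⟩
    refine ⟨not_not.1 h2, ?_⟩
    simpa using h1
  have h1 : ∀ᶠ n : ℕ in Filter.atTop, (P (t ^ n) → P (t ^ (n + 1))) := by
    have := ((hfin t).preimage (f := fun n : ℕ => t ^ n) htinj.injOn).eventually_cofinite_notMem
    rw [Nat.cofinite_eq_atTop] at this
    filter_upwards [this] with n hn h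
    by_contra hc
    exact hn ⟨h, by rw [← pow_succ]; exact hc⟩
  by_cases hP : ∀ᶠ n : ℕ in Filter.atTop, ¬ P (t ^ n)
  · right
    have := ends_aux (fun g => ¬ P g) (fun g => not_congr (hinv g)) hfin' t htinj hP
    simpa using this
  · left
    refine ends_aux P hinv hfin t htinj ?_
    obtain ⟨N, hN⟩ := Filter.eventually_atTop.1 h1
    rw [Filter.not_eventually] at hP
    obtain ⟨M, hM, hM'⟩ := (Filter.frequently_atTop.1 hP) N
    rw [not_not] at hM'
    refine Filter.eventually_atTop.2 ⟨M, fun n hn => ?_⟩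
    induction n, hn using Nat.le_induction with
    | base => exact hM'
    | succ n hn ih => exact hN n (hM.trans hn) ih

theorem one_side {G : Type*} [Group G] (p q : G → ℝ) (hp1 : ∀ g, 1 ≤ p g) (hq1 : ∀ g, 1 ≤ q g)
    (hpm : ∀ g h, p (g * h) ≤ p g * p h) (hqm : ∀ g h, q (g * h) ≤ q g * q h)
    (hpi : ∀ g, p g⁻¹ = p g) (hqi : ∀ g, q g⁻¹ = q g)
    (H : ∀ C : ℝ, {g | p g ≤ C * q g ∧ q g ≤ C * p g}.Finite)
    (t : G) (ht : ¬ IsOfFinOrder t) :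
    (∀ C : ℝ, 0 < C → {g | ¬ C * q g < p g}.Finite) ∨
      (∀ C : ℝ, 0 < C → {g | ¬ C * p g < q g}.Finite) := by
  have key : ∀ p q : G → ℝ, (∀ g, 1 ≤ p g) → (∀ g, 1 ≤ q g) → 
      (∀ C : ℝ, {g | p g ≤ C * q g ∧ q g ≤ C * p g}.Finite) → 
      {g | p g ≤ q g}.Finite → ∀ C : ℝ, 0 < C → {g | ¬ C * q g < p g}.Finite := by
    intro p q hp1 hq1 H hf C hC
    refine (hf.union (H (max C 1))).subset ?_
    intro g hg
    by_cases h : p g ≤ q g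
    · exact Or.inl h
    · right
      have hg' : p g ≤ C * q g := not_lt.1 hg
      have := hp1 g
      have := hq1 g
      push Not at h
      constructor
      · exact hg'.trans (by gcongr; exact le_max_left _ _)
      · have : 1 * p g ≤ max C 1 * p g := by gcongr; exact le_max_right _ _
        linarith
  have := ends_lemma (fun g => q g < p g) (fun g => by rw [hpi, hqi]) ?_ t ht
  · rcases this with h | h
    · left
      exact key p q hp1 hq1 H (by simpa using h)
    · right
      refine key q p hq1 hp1 (fun C => by simpa [and_comm] using H C) ?_
      refine (h.union (H 1)).subset ?_
      intro g hg
      rcases lt_or_eq_of_le (show q g ≤ p g from hg) with h | h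
      · exact Or.inl h
      · right; simp [h]
  · intro s
    refine (H (q s * p s)).subset ?_
    rintro g ⟨h1, h2⟩
    push Not at h2
    have a1 := hpm (g * s) s⁻¹
    rw [mul_inv_cancel_right, hpi] at a1
    have a2 := hqm g s
    have b1 := hp1 s
    have b2 := hq1 s
    have b3 := hp1 g
    have b4 := hq1 g
    constructor
    · calc p g ≤ p (g * s) * p s := a1
        _ ≤ (q g * q s) * p s := by gcongr; linarith
        _ = _ := by ring
    · have : 1 * 1 ≤ q s * p s := by gcongr
      nlinarith

theorem graph_lemma {G : Type*} [Group G]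
    (hres : ∀ γ : G, γ ≠ 1 → ∃ N : Subgroup G, N.Normal ∧ N.FiniteIndex ∧ γ ∉ N)
    (f1 f2 : G →* SL2R)
    (H : ∀ C : ℝ, 0 < C → {g | ¬ C * sl2OpNorm (f2 g) < sl2OpNorm (f1 g)}.Finite) :
    ∃ K : Subgroup G, K.FiniteIndex ∧ ∃ Γ₀ : Subgroup SL2R, ∃ φ : Γ₀ →* SL2R,
        DiscreteTopology Γ₀ ∧
        {x : SL2R × SL2R | ∃ k ∈ K, x = (f1 k, f2 k)}
          = {x : SL2R × SL2R | ∃ γ : Γ₀, x = ((γ : SL2R), φ γ)} ∧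
        ∀ C : ℝ, 0 < C →
          {γ : Γ₀ | ¬ C * sl2OpNorm (φ γ) < sl2OpNorm (γ : SL2R)}.Finite := by
  have hker : {g : G | f1 g = 1 ∧ g ≠ 1}.Finite := by
    refine (H 1 one_pos).subset ?_
    rintro g ⟨h, -⟩
    simp only [Set.mem_ofPred_eq, h, sl2OpNorm_one, one_mul, not_lt]
    exact one_le_sl2OpNorm _
  choose! N hN1 hN2 hN3 using hres
  have := hker.to_subtype
  let K : Subgroup G := ⨅ g : {g : G | f1 g = 1 ∧ g ≠ 1}, N g
  have hK : K.FiniteIndex := Subgroup.finiteIndex_iInf fun g => hN2 _ g.2.2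
  have hinj : Function.Injective (f1.comp K.subtype) := by
    rw [injective_iff_map_eq_one]
    rintro ⟨k, hk⟩ h
    by_contra hne
    have hk1 : k ≠ 1 := fun h' => hne (Subtype.ext h')
    have h' : f1 k = 1 := h
    have : k ∈ N k := (Subgroup.mem_iInf.1 hk) ⟨k, h', hk1⟩
    exact hN3 k hk1 this
  let e := MonoidHom.ofInjective hinj
  have he : ∀ k, ((e k : (f1.comp K.subtype).range) : SL2R) = f1 k := fun k => rfl
  let φ : (f1.comp K.subtype).range →* SL2R := (f2.comp K.subtype).comp e.symm.toMonoidHom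
  have hφ : ∀ k, φ (e k) = f2 k := by
    intro k
    simp [φ]
  have hfin : ∀ C : ℝ, 0 < C →
      {γ : (f1.comp K.subtype).range | ¬ C * sl2OpNorm (φ γ) < sl2OpNorm (γ : SL2R)}.Finite := by
    intro C hC
    refine (((H C hC).preimage (f := K.subtype) Subtype.val_injective.injOn).image e).subset ?_
    intro γ hγ
    obtain ⟨k, rfl⟩ := e.surjective γ
    refine ⟨k, ?_, rfl⟩
    simp only [Set.mem_ofPred_eq, hφ, he] at hγ
    exact hγ
  refine ⟨K, hK, (f1.comp K.subtype).range, φ, ?_, ?_, hfin⟩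
  · rw [discreteTopology_iff_isOpen_singleton]
    intro γ
    have hU : IsOpen {x : (f1.comp K.subtype).range | sl2OpNorm (x : SL2R) < sl2OpNorm (γ : SL2R) + 1} :=
      isOpen_lt (sl2OpNorm_continuous.comp continuous_subtype_val) continuous_const
    have hpos : 0 < sl2OpNorm (γ : SL2R) + 1 := by linarith [sl2OpNorm_nonneg (γ : SL2R)]
    have hUf : {x : (f1.comp K.subtype).range |
        sl2OpNorm (x : SL2R) < sl2OpNorm (γ : SL2R) + 1}.Finite := by
      refine (hfin _ hpos).subset ?_
      intro x hx
      simp only [Set.mem_ofPred_eq] at hx ⊢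
      have := one_le_sl2OpNorm (φ x)
      nlinarith
    have hc := (hUf.subset (Set.sdiff_subset (t := {γ}))).isClosed
    have := hU.sdiff hc
    convert this using 1
    ext x
    simp only [Set.mem_singleton_iff, Set.mem_sdiff, Set.mem_ofPred_eq]
    constructor
    · rintro rfl
      exact ⟨by linarith, by simp⟩
    · rintro ⟨h1, h2⟩
      by_contra hne
      exact h2 ⟨h1, hne⟩
  · ext x
    constructor
    · rintro ⟨k, hk, rfl⟩
      exact ⟨e ⟨k, hk⟩, by rw [hφ, he]⟩
    · rintro ⟨γ, rfl⟩
      obtain ⟨k, rfl⟩ := e.surjective γ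
      exact ⟨k, k.2, by rw [hφ, he]⟩

/-- finiteness on a finite-index subgroup suffices -/
theorem finindex_lemma {G : Type*} [Group G] (p q : G → ℝ) (hp1 : ∀ g, 1 ≤ p g) (hq1 : ∀ g, 1 ≤ q g)
    (hpm : ∀ g h, p (g * h) ≤ p g * p h) (hqm : ∀ g h, q (g * h) ≤ q g * q h)
    (hpi : ∀ g, p g⁻¹ = p g) (hqi : ∀ g, q g⁻¹ = q g) (K : Subgroup G) (hK : K.FiniteIndex)
    (H : ∀ C : ℝ, 0 < C → {g | g ∈ K ∧ p g ≤ C * q g}.Finite) (C : ℝ) (hC : 0 < C) :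
    {g | p g ≤ C * q g}.Finite := by
  refine Set.Finite.of_finite_fibers (fun g => (QuotientGroup.mk g : G ⧸ K)) (Set.toFinite _) ?_
  rintro _ ⟨c, -, rfl⟩
  have b3 := hp1 c
  have b4 := hq1 c
  refine ((H (p c * C * q c) (by positivity)).image (fun g => c * g)).subset ?_
  rintro g ⟨hg, hgc⟩
  refine ⟨c⁻¹ * g, ⟨QuotientGroup.eq.1 hgc.symm, ?_⟩, by simp⟩
  have a1 := hpm c⁻¹ g
  have a2 := hqm c (c⁻¹ * g)
  rw [hpi] at a1
  rw [mul_inv_cancel_left] at a2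
  have b1 := hp1 g
  have b2 := hq1 g
  calc p (c⁻¹ * g) ≤ p c * p g := a1
    _ ≤ p c * (C * q g) := by gcongr; exact hg
    _ ≤ p c * (C * (q c * q (c⁻¹ * g))) := by gcongr
    _ = _ := by ring

theorem stmt_1 (Γ : Subgroup (SL2R × SL2R))
    (hdiscrete : DiscreteTopology Γ)
    (hresfin : ∀ γ : Γ, γ ≠ 1 → ∃ N : Subgroup Γ, N.Normal ∧ N.FiniteIndex ∧ γ ∉ N)
    (hnottorsion : ∃ g ∈ Γ, ¬ IsOfFinOrder g) :
    (∀ K L : Set SL2R, IsCompact K → IsCompact L →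
      {γ : Γ | ((fun g => (γ : SL2R × SL2R).1 * g * ((γ : SL2R × SL2R).2)⁻¹) '' K ∩ L).Nonempty}.Finite)
    ↔
    ∃ doSwap : Bool, ∃ Γ' : Subgroup (SL2R × SL2R), Γ' ≤ Γ ∧ (Γ'.subgroupOf Γ).FiniteIndex ∧
      ∃ Γ₀ : Subgroup SL2R, ∃ φ : Γ₀ →* SL2R,
        DiscreteTopology Γ₀ ∧
        (if doSwap then Prod.swap '' (Γ' : Set (SL2R × SL2R)) else (Γ' : Set (SL2R × SL2R)))
          = {x : SL2R × SL2R | ∃ γ : Γ₀, x = ((γ : SL2R), φ γ)} ∧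
        ∀ C : ℝ, 0 < C →
          {γ : Γ₀ | ¬ C * sl2OpNorm (φ γ) < sl2OpNorm (γ : SL2R)}.Finite := by
  rw [sl2_pd_iff]
  let f1 : Γ →* SL2R := (MonoidHom.fst SL2R SL2R).comp Γ.subtype
  let f2 : Γ →* SL2R := (MonoidHom.snd SL2R SL2R).comp Γ.subtype
  have hm : ∀ (f : Γ →* SL2R) g h, sl2OpNorm (f (g * h)) ≤ sl2OpNorm (f g) * sl2OpNorm (f h) := by
    intro f g h
    rw [map_mul]
    exact sl2OpNorm_mul _ _
  have hi : ∀ (f : Γ →* SL2R) g, sl2OpNorm (f g⁻¹) = sl2OpNorm (f g) := by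
    intro f g
    rw [map_inv, sl2OpNorm_inv]
  constructor
  · intro H
    obtain ⟨t, htΓ, ht⟩ := hnottorsion
    have ht' : ¬ IsOfFinOrder (⟨t, htΓ⟩ : Γ) := by
      rwa [← Submonoid.isOfFinOrder_coe (H := Γ.toSubmonoid)]
    rcases one_side (fun g : Γ => sl2OpNorm (f1 g)) (fun g : Γ => sl2OpNorm (f2 g))
      (fun _ => one_le_sl2OpNorm _) (fun _ => one_le_sl2OpNorm _) (hm f1) (hm f2) (hi f1) (hi f2)
      H _ ht' with h | h
    · obtain ⟨K, hK, Γ₀, φ, hd, he, hf⟩ := graph_lemma hresfin f1 f2 h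
      refine ⟨false, K.map Γ.subtype, Subgroup.map_subtype_le K, ?_, Γ₀, φ, hd, ?_, hf⟩
      · have : (K.map Γ.subtype).subgroupOf Γ = K :=
          Subgroup.comap_map_eq_self_of_injective Γ.subtype_injective K
        rwa [this]
      · rw [← he]
        ext x
        constructor
        · rintro ⟨k, hk, rfl⟩
          exact ⟨k, hk, rfl⟩
        · rintro ⟨k, hk, rfl⟩
          exact ⟨k, hk, rfl⟩
    · obtain ⟨K, hK, Γ₀, φ, hd, he, hf⟩ := graph_lemma hresfin f2 f1 h
      refine ⟨true, K.map Γ.subtype, Subgroup.map_subtype_le K, ?_, Γ₀, φ, hd, ?_, hf⟩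
      · have : (K.map Γ.subtype).subgroupOf Γ = K :=
          Subgroup.comap_map_eq_self_of_injective Γ.subtype_injective K
        rwa [this]
      · rw [← he]
        ext x
        constructor
        · rintro ⟨_, ⟨k, hk, rfl⟩, rfl⟩
          exact ⟨k, hk, rfl⟩
        · rintro ⟨k, hk, rfl⟩
          exact ⟨_, ⟨k, hk, rfl⟩, rfl⟩
  · rintro ⟨b, Γ', hle, hfi, Γ₀, φ, -, he, hf⟩ C
    rcases b with _ | _
    · have hmem : ∀ g ∈ Γ'.subgroupOf Γ, ∃ γ : Γ₀, (g : SL2R × SL2R) = ((γ : SL2R), φ γ) := by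
        intro g hg
        have : (g : SL2R × SL2R) ∈ (Γ' : Set (SL2R × SL2R)) := hg
        simp only [Bool.false_eq_true, if_false] at he
        rwa [he] at this
      have hmain := finindex_lemma (fun g : Γ => sl2OpNorm (f1 g)) (fun g : Γ => sl2OpNorm (f2 g))
        (fun _ => one_le_sl2OpNorm _) (fun _ => one_le_sl2OpNorm _) (hm f1) (hm f2) (hi f1) (hi f2)
        (Γ'.subgroupOf Γ) hfi ?_ (max C 1) (by positivity)
      · refine hmain.subset ?_
        rintro g ⟨h1, -⟩
        refine h1.trans ?_
        have := sl2OpNorm_nonneg (f2 g)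
        exact mul_le_mul_of_nonneg_right (le_max_left _ _) this
      · intro D hD
        refine Set.Finite.of_finite_image (f := fun g : Γ => (g : SL2R × SL2R)) ?_
          Subtype.val_injective.injOn
        refine ((hf D hD).image (fun γ : Γ₀ => ((γ : SL2R), φ γ))).subset ?_
        rintro _ ⟨g, ⟨hg, hgD⟩, rfl⟩
        obtain ⟨γ, hγ⟩ := hmem g hg
        refine ⟨γ, ?_, hγ.symm⟩
        simp only [f1, f2, MonoidHom.comp_apply, Subgroup.subtype_apply, MonoidHom.coe_fst,
          MonoidHom.coe_snd, hγ] at hgD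
        exact not_lt.2 hgD
    · have hmem : ∀ g ∈ Γ'.subgroupOf Γ, ∃ γ : Γ₀, (g : SL2R × SL2R) = (φ γ, (γ : SL2R)) := by
        intro g hg
        have : (g : SL2R × SL2R).swap ∈ Prod.swap '' (Γ' : Set (SL2R × SL2R)) := ⟨_, hg, rfl⟩
        simp only [if_true] at he
        rw [he] at this
        obtain ⟨γ, hγ⟩ := this
        exact ⟨γ, Prod.swap_injective hγ⟩
      have hmain := finindex_lemma (fun g : Γ => sl2OpNorm (f2 g)) (fun g : Γ => sl2OpNorm (f1 g))
        (fun _ => one_le_sl2OpNorm _) (fun _ => one_le_sl2OpNorm _) (hm f2) (hm f1) (hi f2) (hi f1)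
        (Γ'.subgroupOf Γ) hfi ?_ (max C 1) (by positivity)
      · refine hmain.subset ?_
        rintro g ⟨-, h1⟩
        refine h1.trans ?_
        have := sl2OpNorm_nonneg (f1 g)
        exact mul_le_mul_of_nonneg_right (le_max_left _ _) this
      · intro D hD
        refine Set.Finite.of_finite_image (f := fun g : Γ => (g : SL2R × SL2R)) ?_
          Subtype.val_injective.injOn
        refine ((hf D hD).image (fun γ : Γ₀ => (φ γ, (γ : SL2R)))).subset ?_
        rintro _ ⟨g, ⟨hg, hgD⟩, rfl⟩
        obtain ⟨γ, hγ⟩ := hmem g hg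
        refine ⟨γ, ?_, hγ.symm⟩
        simp only [f1, f2, MonoidHom.comp_apply, Subgroup.subtype_apply, MonoidHom.coe_fst,
          MonoidHom.coe_snd, hγ] at hgD
        exact not_lt.2 hgD
end

section
/- For every n ≥ 1, every discrete torsion subgroup of GL_n(ℝ) is finite. -/
open Matrix

lemma jac_int : IsJacobsonRing ℤ := by
  rw [isJacobsonRing_iff_prime_eq]
  intro P hP
  by_cases h : P = ⊥
  · subst h
    rw [eq_bot_iff]
    intro x hx
    rw [Ideal.mem_jacobson_bot] at hx
    have h1 := hx x
    rw [Int.isUnit_iff] at h1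
    simp only [Ideal.mem_bot]
    rcases h1 with h1 | h1 <;> nlinarith
  · have := hP.isMaximal h
    exact Ideal.jacobson_eq_self_of_isMaximal

lemma residue_finite (K : Type*) [Field K] [Algebra.FiniteType ℤ K] :
    Finite K ∧ ∃ l : ℕ, l.Prime ∧ CharP K l := by
  have := jac_int
  have hfin : Module.Finite ℤ K := finite_of_finite_type_of_isJacobsonRing ℤ K
  obtain ⟨l, hl⟩ := CharP.exists K
  rcases CharP.char_is_prime_or_zero K l with h | h
  · refine ⟨?_, l, h, hl⟩
    have : Fact l.Prime := ⟨h⟩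
    let _ : Algebra (ZMod l) K := ZMod.algebra K l
    have : Module.Finite (ZMod l) K := Module.Finite.of_restrictScalars_finite ℤ (ZMod l) K
    exact Module.finite_of_finite (ZMod l)
  · exfalso
    subst h
    have := CharP.charP_to_charZero K
    have hint : Algebra.IsIntegral ℤ K := inferInstance
    have hinj : Function.Injective (algebraMap ℤ K) := by
      intro a b hab
      simpa using hab
    exact Int.not_isField (isField_of_isIntegral_of_isField hinj (Field.toIsField K))

lemma residue_finite' {R K : Type*} [CommRing R] [Algebra ℤ R] [Algebra.FiniteType ℤ R]
    [Field K] (f : R →+* K) (hf : Function.Surjective f) :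
    Finite K ∧ ∃ l : ℕ, l.Prime ∧ CharP K l := by
  let F : R →ₐ[ℤ] K := { f with commutes' := by intro r; simp }
  have : Algebra.FiniteType ℤ K := Algebra.FiniteType.of_surjective F hf
  exact residue_finite K

lemma congr_torsion {R K : Type*} [CommRing R] [IsDomain R] [Field K] (f : R →+* K) {n : ℕ}
    (x : GL (Fin n) R) (q : ℕ) (hx : GeneralLinearGroup.map f x = 1) (hq : x ^ q = 1)
    (hqK : (q : K) ≠ 0) : x = 1 := by
  set X : Matrix (Fin n) (Fin n) R := x.val with hX
  have hXq : X ^ q = 1 := by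
    rw [hX, ← Units.val_pow_eq_pow_val, hq, Units.val_one]
  set N := ∑ i ∈ Finset.range q, X ^ i with hN
  have h0 : N * (X - 1) = 0 := by rw [hN, geom_sum_mul, hXq, sub_self]
  have hfX : f.mapMatrix X = 1 := congrArg Units.val hx
  have hfN : f.mapMatrix N = (q : K) • (1 : Matrix (Fin n) (Fin n) K) := by
    rw [hN, map_sum]
    simp only [map_pow, hfX, one_pow, Finset.sum_const, Finset.card_range]
    rw [Nat.cast_smul_eq_nsmul]
  have hdet : N.det ≠ 0 := by
    intro h
    have h2 : f N.det = 0 := by rw [h, map_zero]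
    rw [RingHom.map_det, hfN, det_smul, det_one, mul_one] at h2
    exact pow_ne_zero _ hqK h2
  have h3 : N.det • (X - 1) = 0 := by
    have : N.adjugate * (N * (X - 1)) = 0 := by rw [h0, mul_zero]
    rwa [← mul_assoc, adjugate_mul, smul_mul_assoc, one_mul] at this
  have h4 : X - 1 = 0 := (smul_eq_zero.mp h3).resolve_left hdet
  exact Units.ext (sub_eq_zero.mp h4)

lemma lift_ring {n : ℕ} (S : Set (GL (Fin n) ℝ)) (hS : S.Finite) (r : ℝ) :
    ∃ R : Subalgebra ℤ ℝ, Algebra.FiniteType ℤ R ∧ r ∈ R ∧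
      ∃ φ : Subgroup.closure S →* GL (Fin n) R,
        ∀ g, GeneralLinearGroup.map (algebraMap R ℝ) (φ g) = g := by
  set E : Set ℝ := {r} ∪ (⋃ g ∈ S, ⋃ i, ⋃ j, {g i j, g⁻¹ i j}) with hE
  have hEf : E.Finite := by
    refine (Set.finite_singleton r).union (hS.biUnion fun g _ => ?_)
    exact Set.finite_iUnion fun i => Set.finite_iUnion fun j => Set.toFinite _
  set R := Algebra.adjoin ℤ E with hR
  have hmem : ∀ g ∈ S, ∀ i j, g i j ∈ R ∧ g⁻¹ i j ∈ R := by
    intro g hg i j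
    constructor <;> apply Algebra.subset_adjoin <;> right <;>
      simp only [Set.mem_iUnion] <;> refine ⟨g, hg, i, j, ?_⟩ <;> simp
  refine ⟨R, .adjoin_of_finite hEf, Algebra.subset_adjoin (Or.inl rfl), ?_⟩
  have hinj0 : Function.Injective (algebraMap R ℝ) := Subtype.val_injective
  have hinjM : Function.Injective ((algebraMap R ℝ).mapMatrix (m := Fin n)) :=
    fun a b h => Matrix.map_injective hinj0 h
  have hinj : Function.Injective (GeneralLinearGroup.map (n := Fin n) (algebraMap R ℝ)) :=
    Units.map_injective hinjM
  have hle : Subgroup.closure S ≤ (GeneralLinearGroup.map (n := Fin n) (algebraMap R ℝ)).range := by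
    rw [Subgroup.closure_le]
    intro g hg
    let A : Matrix (Fin n) (Fin n) R := fun i j => ⟨g i j, (hmem g hg i j).1⟩
    let B : Matrix (Fin n) (Fin n) R := fun i j => ⟨g⁻¹ i j, (hmem g hg i j).2⟩
    have hA : (algebraMap R ℝ).mapMatrix A = g.val := rfl
    have hB : (algebraMap R ℝ).mapMatrix B = g⁻¹.val := rfl
    refine ⟨⟨A, B, hinjM ?_, hinjM ?_⟩, Units.ext hA⟩
    · rw [map_mul, hA, hB, map_one, Units.mul_inv]
    · rw [map_mul, hA, hB, map_one, Units.inv_mul]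
  refine ⟨(MonoidHom.ofInjective hinj).symm.toMonoidHom.comp (Subgroup.inclusion hle), fun g => ?_⟩
  exact congrArg Subtype.val
    ((MonoidHom.ofInjective hinj).apply_symm_apply (Subgroup.inclusion hle g))

lemma cong_hom {n : ℕ} (S : Set (GL (Fin n) ℝ)) (hS : S.Finite) (p : ℕ) (hp : p.Prime) :
    ∃ (l : ℕ) (H : Type) (_ : Group H) (ψ : Subgroup.closure S →* H), Finite H ∧ l.Prime ∧ l ≠ p ∧
      ∀ g, ψ g = 1 → ∀ q : ℕ, q.Prime → q ≠ l → g ^ q = 1 → g = 1 := by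
  obtain ⟨R, hR, hpR, φ, hφ⟩ := lift_ring S hS ((p : ℝ)⁻¹)
  obtain ⟨m, hm⟩ := Ideal.exists_maximal R
  let _ : Field (R ⧸ m) := Ideal.Quotient.field m
  obtain ⟨hfin, l, hl, hchar⟩ :=
    residue_finite' (Ideal.Quotient.mk m) Ideal.Quotient.mk_surjective
  have : Finite (GL (Fin n) (R ⧸ m)) := inferInstance
  refine ⟨l, GL (Fin n) (R ⧸ m), inferInstance,
    (GeneralLinearGroup.map (Ideal.Quotient.mk m)).comp φ, this, hl, ?_, ?_⟩
  · rintro rfl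
    have h1 : (l : R) * ⟨(l : ℝ)⁻¹, hpR⟩ = 1 := by
      apply Subtype.ext
      have : (l : ℝ) ≠ 0 := by exact_mod_cast hl.ne_zero
      simp [this]
    have h2 := congrArg (Ideal.Quotient.mk m) h1
    rw [map_mul, map_natCast, CharP.cast_eq_zero, zero_mul, map_one] at h2
    exact zero_ne_one h2
  · intro g hg q hq hql hgq
    have h1 : φ g = 1 := by
      refine congr_torsion (Ideal.Quotient.mk m) (φ g) q hg (by rw [← map_pow, hgq, map_one]) ?_
      rw [Ne, CharP.cast_eq_zero_iff (R ⧸ m) l]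
      intro hd
      exact hql ((Nat.prime_dvd_prime_iff_eq hl hq).mp hd).symm
    apply Subtype.ext
    rw [← hφ g, h1, map_one]
    rfl

lemma schur {n : ℕ} (S : Set (GL (Fin n) ℝ)) (hS : S.Finite)
    (ht : ∀ g ∈ Subgroup.closure S, IsOfFinOrder g) : Finite (Subgroup.closure S) := by
  obtain ⟨l1, H1, _, ψ1, hf1, hl1, -, h1⟩ := cong_hom S hS 2 Nat.prime_two
  obtain ⟨l2, H2, _, ψ2, hf2, -, h12, h2⟩ := cong_hom S hS l1 hl1
  refine Finite.of_injective (ψ1.prod ψ2) ?_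
  rw [injective_iff_map_eq_one]
  intro g hg
  by_contra hne
  have hg1 : ψ1 g = 1 := congrArg Prod.fst hg
  have hg2 : ψ2 g = 1 := congrArg Prod.snd hg
  have hfo : IsOfFinOrder g := by
    rw [← Submonoid.isOfFinOrder_coe]
    exact ht g g.2
  have hord : orderOf g ≠ 1 := by rwa [Ne, orderOf_eq_one_iff]
  obtain ⟨q, hq, k, hk⟩ := Nat.exists_prime_and_dvd hord
  have hgk : (g ^ k) ^ q = 1 := by
    rw [← pow_mul, mul_comm, ← hk, pow_orderOf_eq_one]
  have hgk1 : g ^ k = 1 := by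
    by_cases hql : q = l1
    · exact h2 _ (by rw [map_pow, hg2, one_pow]) q hq (by rw [hql]; exact h12.symm) hgk
    · exact h1 _ (by rw [map_pow, hg1, one_pow]) q hq hql hgk
  have hdv := orderOf_dvd_of_pow_eq_one hgk1
  have hpos := hfo.orderOf_pos
  have hkpos : 0 < k := by
    rcases Nat.eq_zero_or_pos k with h | h
    · rw [h, mul_zero] at hk; omega
    · exact h
  have := Nat.le_of_dvd hkpos hdv
  have := hq.two_le
  nlinarith

/-- Invariant bilinear forms. -/
def invForms {n : ℕ} (S : Set (GL (Fin n) ℝ)) : Submodule ℝ (Matrix (Fin n) (Fin n) ℝ) where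
  carrier := {B | ∀ g ∈ S, g.valᵀ * B * g.val = B}
  add_mem' := by
    intro a b ha hb g hg
    rw [mul_add, add_mul, ha g hg, hb g hg]
  zero_mem' := by intro g _; simp
  smul_mem' := by
    intro c a ha g hg
    rw [mul_smul_comm, smul_mul_assoc, ha g hg]

lemma bounded_of_torsion {n : ℕ} (Γ : Subgroup (GL (Fin n) ℝ))
    (ht : ∀ g ∈ Γ, IsOfFinOrder g) : ∃ C : ℝ, ∀ g ∈ Γ, ∀ i j, |g i j| ≤ C := by
  -- choose finite subset with invariant forms of minimal dimension
  let P : ℕ → Prop := fun d => ∃ S : Set (GL (Fin n) ℝ), S.Finite ∧ S ⊆ Γ ∧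
    Module.finrank ℝ (invForms S) = d
  have hP : ∃ d, P d := ⟨_, ∅, Set.finite_empty, Set.empty_subset _, rfl⟩
  classical
  obtain ⟨S, hSf, hSΓ, hSd⟩ := Nat.find_spec hP
  have hcl : Subgroup.closure S ≤ Γ := (Subgroup.closure_le _).mpr hSΓ
  have hfin : Finite (Subgroup.closure S) := schur S hSf fun g hg => ht g (hcl hg)
  let _ := Fintype.ofFinite (Subgroup.closure S)
  set B : Matrix (Fin n) (Fin n) ℝ :=
    ∑ h : Subgroup.closure S, h.1.valᵀ * h.1.val with hB
  have hBS : B ∈ invForms S := by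
    intro g hg
    rw [hB, Finset.mul_sum, Finset.sum_mul]
    refine Fintype.sum_equiv (Equiv.mulRight ⟨g, Subgroup.subset_closure hg⟩) _ _ fun h => ?_
    simp [Matrix.mul_assoc]
  have hBΓ : ∀ g ∈ Γ, g.valᵀ * B * g.val = B := by
    intro g hg
    have hle : invForms (insert g S) ≤ invForms S :=
      fun A hA x hx => hA x (Set.mem_insert_of_mem _ hx)
    have hmin : Nat.find hP ≤ Module.finrank ℝ (invForms (insert g S)) :=
      Nat.find_min' hP ⟨_, hSf.insert g, Set.insert_subset hg hSΓ, rfl⟩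
    have heq := Submodule.eq_of_le_of_finrank_le hle (by rw [hSd]; exact hmin)
    have : B ∈ invForms (insert g S) := by rw [heq]; exact hBS
    exact this g (Set.mem_insert _ _)
  have htr : ∀ A : Matrix (Fin n) (Fin n) ℝ, (Aᵀ * A).trace = ∑ j, ∑ i, A i j ^ 2 := by
    intro A
    simp [Matrix.trace, Matrix.mul_apply, pow_two]
  refine ⟨B.trace + 1, fun g hg i j => ?_⟩
  have h1 : (g.valᵀ * g.val).trace ≤ B.trace := by
    rw [← hBΓ g hg, hB, Finset.mul_sum, Finset.sum_mul, Matrix.trace_sum]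
    have h2 := Finset.single_le_sum (s := Finset.univ)
      (f := fun h : Subgroup.closure S => (g.valᵀ * (h.1.valᵀ * h.1.val) * g.val).trace)
      (fun h _ => by
        have : g.valᵀ * (h.1.valᵀ * h.1.val) * g.val = (h.1.val * g.val)ᵀ * (h.1.val * g.val) := by
          simp [Matrix.mul_assoc]
        rw [this, htr]
        positivity) (Finset.mem_univ 1)
    simpa using h2
  rw [htr] at h1
  have h3 : g.val i j ^ 2 ≤ B.trace := by
    refine le_trans ?_ h1
    refine le_trans ?_ (Finset.single_le_sum (f := fun j => ∑ i, g.val i j ^ 2)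
      (fun _ _ => by positivity) (Finset.mem_univ j))
    exact Finset.single_le_sum (f := fun i => g.val i j ^ 2)
      (fun _ _ => by positivity) (Finset.mem_univ i)
  apply abs_le_of_sq_le_sq' _ _ |> abs_le.mpr
  · nlinarith [sq_nonneg (g.val i j)]
  · nlinarith [sq_nonneg (g.val i j)]

/-!
STATEMENT 15: for n ≥ 1, every discrete torsion subgroup of GL_n(ℝ) is finite.
Discreteness is expressed by saying that the image of Γ in the space of n×n
real matrices is a discrete subset (for the subspace topology).
-/

theorem stmt_15 (n : ℕ) (hn : 1 ≤ n)
    (Γ : Subgroup (GL (Fin n) ℝ))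
    -- Γ is discrete as a subset of the n×n real matrices:
    (hdiscrete : DiscreteTopology
      ((fun g : GL (Fin n) ℝ => (g : Matrix (Fin n) (Fin n) ℝ)) '' (Γ : Set (GL (Fin n) ℝ))))
    -- Γ is a torsion group:
    (htorsion : ∀ g ∈ Γ, IsOfFinOrder g) :
    (Γ : Set (GL (Fin n) ℝ)).Finite := by
  obtain ⟨C, hC⟩ := bounded_of_torsion Γ htorsion
  have hdisc : DiscreteTopology Γ := by
    let f : Γ → ((fun g : GL (Fin n) ℝ => (g : Matrix (Fin n) (Fin n) ℝ)) ''
      (Γ : Set (GL (Fin n) ℝ))) := fun g => ⟨g.1.val, g.1, g.2, rfl⟩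
    refine DiscreteTopology.of_continuous_injective (f := f) ?_ ?_
    · exact Continuous.subtype_mk (Units.continuous_val.comp continuous_subtype_val) _
    · intro a b h
      exact Subtype.ext (Units.ext (congrArg Subtype.val h))
  have hclosed : IsClosed (Γ : Set (GL (Fin n) ℝ)) := Subgroup.isClosed_of_discrete
  let K : Set (Matrix (Fin n) (Fin n) ℝ) :=
    Set.univ.pi fun _ => Set.univ.pi fun _ => Set.Icc (-C) C
  have hK : IsCompact K := isCompact_univ_pi fun _ => isCompact_univ_pi fun _ => isCompact_Icc
  have hKop : IsCompact (MulOpposite.op '' K) := hK.image MulOpposite.continuous_op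
  have hcomp := (Units.isClosedEmbedding_embedProduct
    (α := Matrix (Fin n) (Fin n) ℝ)).isCompact_preimage (hK.prod hKop)
  have hsub : (Γ : Set (GL (Fin n) ℝ)) ⊆
      Units.embedProduct (Matrix (Fin n) (Fin n) ℝ) ⁻¹' (K ×ˢ (MulOpposite.op '' K)) := by
    intro g hg
    refine ⟨fun i _ j _ => abs_le.mp (hC g hg i j), g⁻¹.val, fun i _ j _ => ?_, rfl⟩
    exact abs_le.mp (hC g⁻¹ (Γ.inv_mem hg) i j)
  have hΓc := hcomp.of_isClosed_subset hclosed hsub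
  exact hΓc.finite ⟨hdisc⟩
end
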